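/- arXiv:2310.07362 — 2 statements merged into one kernel-verified Lean document; each statement's English description precedes it below -/
import Mathlib

section
/- The real vector space of 8×8 Hermitian complex matrices O satisfying C·O = O·C, where C is the D1Q3 collision operator, has real dimension exactly 50; equivalently, the D1Q3 model has exactly 50 linearly independent quantum invariants. -/
open Matrix

/-- The identity Pauli matrix `I`. -/
def PI : Matrix (Fin 2) (Fin 2) ℂ := !![1, 0; 0, 1]

/-- The Pauli matrix `X`. -/
def PX : Matrix (Fin 2) (Fin 2) ℂ := !![0, 1; 1, 0]

/-- The Pauli matrix `Y`. -/
def PY : Matrix (Fin 2) (Fin 2) ℂ := !![0, -Complex.I; Complex.I, 0]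

/-- The Pauli matrix `Z`. -/
def PZ : Matrix (Fin 2) (Fin 2) ℂ := !![1, 0; 0, -1]

/-- The `k`-th binary digit of `s ∈ {0,…,7}`, as an element of `Fin 2`. -/
def bit (k : ℕ) (s : Fin 8) : Fin 2 := ⟨s.val / 2 ^ k % 2, Nat.mod_lt _ (by norm_num)⟩

/-- The Kronecker product `A ⊗ B ⊗ D` of three `2 × 2` matrices, as an `8 × 8` matrix:
its `(i,j)` entry is `A_{i₂ j₂} B_{i₁ j₁} D_{i₀ j₀}` where `i = 4i₂ + 2i₁ + i₀`. -/
def kron3 (A B D : Matrix (Fin 2) (Fin 2) ℂ) : Matrix (Fin 8) (Fin 8) ℂ :=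
  Matrix.of fun i j => A (bit 2 i) (bit 2 j) * B (bit 1 i) (bit 1 j) * D (bit 0 i) (bit 0 j)

/-- The D1Q3 collision operator: the `8 × 8` permutation matrix with
`C e₂ = e₅`, `C e₅ = e₂` and `C e_s = e_s` for `s ∉ {2,5}`. -/
def collC : Matrix (Fin 8) (Fin 8) ℂ :=
  Matrix.of fun i j => if i = Equiv.swap (2 : Fin 8) 5 j then 1 else 0

/-- The real vector space of Hermitian `n × n` complex matrices commuting with `C`,
i.e. the quantum invariants of the collision operator `C`. -/
noncomputable def quantumInvariants {n : Type*} [Fintype n] (C : Matrix n n ℂ) :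
    Submodule ℝ (Matrix n n ℂ) where
  carrier := {O | O.IsHermitian ∧ C * O = O * C}
  add_mem' := fun ha hb =>
    ⟨ha.1.add hb.1, by rw [Matrix.mul_add, Matrix.add_mul, ha.2, hb.2]⟩
  zero_mem' := ⟨Matrix.isHermitian_zero, by rw [Matrix.mul_zero, Matrix.zero_mul]⟩
  smul_mem' := fun r O hO =>
    ⟨by rw [Matrix.IsHermitian, Matrix.conjTranspose_smul, star_trivial, hO.1],
     by rw [Matrix.mul_smul, Matrix.smul_mul, hO.2]⟩

/-- The transposition swapping `2` and `5`. -/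
abbrev sg : Equiv.Perm (Fin 8) := Equiv.swap 2 5

theorem sg_sg (i : Fin 8) : sg (sg i) = i := by
  simp [sg]

theorem collC_mul_apply (O : Matrix (Fin 8) (Fin 8) ℂ) (i j : Fin 8) :
    (collC * O) i j = O (sg i) j := by
  have h : ∀ k, (i = sg k) ↔ (k = sg i) := fun k =>
    ⟨fun h => by rw [h, sg_sg], fun h => by rw [h, sg_sg]⟩
  simp only [Matrix.mul_apply, collC, Matrix.of_apply, h]
  simp

theorem mul_collC_apply (O : Matrix (Fin 8) (Fin 8) ℂ) (i j : Fin 8) :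
    (O * collC) i j = O i (sg j) := by
  simp [Matrix.mul_apply, collC]

theorem mem_inv_iff (O : Matrix (Fin 8) (Fin 8) ℂ) :
    O ∈ quantumInvariants collC ↔
      (∀ i j, star (O j i) = O i j) ∧ ∀ i j, O (sg i) (sg j) = O i j := by
  change (O.IsHermitian ∧ collC * O = O * collC) ↔ _
  refine and_congr Matrix.IsHermitian.ext_iff ⟨fun h i j => ?_, fun h => ?_⟩
  · have := congrFun (congrFun h i) (sg j)
    rwa [collC_mul_apply, mul_collC_apply, sg_sg] at this
  · ext i j
    rw [collC_mul_apply, mul_collC_apply, ← h i (sg j), sg_sg]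

/-- Canonical representatives of the orbits of `sg × sg` on index pairs. -/
abbrev OrbRep (p : Fin 8 × Fin 8) : Prop :=
  8 * p.1.val + p.2.val ≤ 8 * (sg p.1).val + (sg p.2).val

theorem rep_or (i j : Fin 8) (h : ¬ OrbRep (i, j)) : OrbRep (sg i, sg j) := by
  simp only [OrbRep, sg_sg] at h ⊢
  omega

theorem rep_both (i j : Fin 8) (h : OrbRep (i, j)) (h' : OrbRep (sg i, sg j)) :
    sg i = i ∧ sg j = j := by
  simp only [OrbRep, sg_sg] at h h'
  have := (sg i).isLt
  have := (sg j).isLt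
  constructor <;> apply Fin.ext <;> omega

/-- Extension of a function on representatives to all index pairs. -/
def extd (f : {p // OrbRep p} → ℝ) (i j : Fin 8) : ℝ :=
  if h : OrbRep (i, j) then f ⟨(i, j), h⟩ else f ⟨(sg i, sg j), rep_or i j h⟩

theorem extd_sg (f : {p // OrbRep p} → ℝ) (i j : Fin 8) : extd f (sg i) (sg j) = extd f i j := by
  by_cases h : OrbRep (i, j)
  · by_cases h' : OrbRep (sg i, sg j)
    · obtain ⟨h1, h2⟩ := rep_both i j h h'
      rw [h1, h2]
    · simp only [extd, dif_pos h, dif_neg h', sg_sg]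
  · simp only [extd, dif_neg h, dif_pos (rep_or i j h)]

/-- Hermitian matrices commuting with `C` are real functions on orbit representatives. -/
noncomputable def invEquiv : quantumInvariants collC ≃ₗ[ℝ] ({p // OrbRep p} → ℝ) where
  toFun O := fun p => (O.1 p.1.1 p.1.2).re + (O.1 p.1.1 p.1.2).im
  map_add' A B := by
    funext p
    simp
    ring
  map_smul' r A := by
    funext p
    simp
    ring
  invFun f := ⟨Matrix.of fun i j =>
      ⟨(extd f i j + extd f j i) / 2, (extd f i j - extd f j i) / 2⟩, by
    rw [mem_inv_iff]
    refine ⟨fun i j => ?_, fun i j => ?_⟩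
    · apply Complex.ext <;> simp <;> ring
    · simp only [Matrix.of_apply, extd_sg]⟩
  left_inv O := by
    obtain ⟨O, hO⟩ := O
    obtain ⟨h1, h2⟩ := (mem_inv_iff O).1 hO
    have key : ∀ i j, extd (fun p => (O p.1.1 p.1.2).re + (O p.1.1 p.1.2).im) i j
        = (O i j).re + (O i j).im := by
      intro i j
      unfold extd
      split_ifs with h
      · rfl
      · simp only [h2]
    apply Subtype.ext
    ext i j
    have hr : (O j i).re = (O i j).re := by rw [← h1 i j]; simp
    have hi : (O j i).im = - (O i j).im := by rw [← h1 i j]; simp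
    simp only [Matrix.of_apply, key]
    apply Complex.ext <;> simp only [hr, hi] <;> ring
  right_inv f := by
    funext p
    have : extd f p.1.1 p.1.2 = f p := by
      unfold extd
      rw [dif_pos p.2]
    simp only [Matrix.of_apply]
    rw [← this]
    ring

theorem card_rep : Fintype.card {p : Fin 8 × Fin 8 // OrbRep p} = 50 := by
  decide +kernel

/-- **D1Q3 has exactly 50 linearly independent quantum invariants:** the real vector
space of Hermitian `8 × 8` matrices `O` with `C·O = O·C` has real dimension `50`. -/
theorem d1q3_quantum_invariants_dim :
    Module.finrank ℝ (quantumInvariants collC) = 50 := by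
  rw [invEquiv.finrank_eq, Module.finrank_fintype_fun_eq_card, card_rep]
end

section
/- Let C₃ be the 64×64 permutation matrix on ℂ^64 defined by C₃ e_21 = e_42, C₃ e_42 = e_21, and C₃ e_s = e_s for s ∉ {21, 42}. The real vector space of 64×64 Hermitian complex matrices O satisfying C₃·O = O·C₃ has real dimension exactly 3970 = 4^6 − 126; equivalently, the FHP model with only the 3-body collision has exactly 3970 linearly independent quantum invariants. -/
open Matrix

/-- The FHP 3-body collision operator: the `64 × 64` permutation matrix with
`C₃ e₂₁ = e₄₂`, `C₃ e₄₂ = e₂₁` and `C₃ e_s = e_s` for `s ∉ {21, 42}`. -/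
def collC3 : Matrix (Fin 64) (Fin 64) ℂ :=
  Matrix.of fun i j => if i = Equiv.swap (21 : Fin 64) 42 j then 1 else 0

/-- Simultaneous relabelling of an entry position by the transposition. -/
def tauC3 (p : Fin 64 × Fin 64) : Fin 64 × Fin 64 :=
  (Equiv.swap (21 : Fin 64) 42 p.1, Equiv.swap (21 : Fin 64) 42 p.2)

/-- Representatives of the orbits of `tauC3`. -/
def RepC3 (p : Fin 64 × Fin 64) : Prop := p.1 ≠ 42 ∧ (p.1 = 21 ∨ p.2 ≠ 42)

instance : DecidablePred RepC3 := fun p => by unfold RepC3; infer_instance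

lemma tauC3_tauC3 (p : Fin 64 × Fin 64) : tauC3 (tauC3 p) = p := by
  simp [tauC3]

lemma repC3_tau (p : Fin 64 × Fin 64) (h : ¬ RepC3 p) : RepC3 (tauC3 p) := by
  obtain ⟨i, j⟩ := p
  simp only [RepC3, tauC3, Equiv.swap_apply_def] at *
  grind

lemma repC3_both (p : Fin 64 × Fin 64) (h : RepC3 p) (h' : RepC3 (tauC3 p)) : tauC3 p = p := by
  obtain ⟨i, j⟩ := p
  simp only [RepC3, tauC3, Equiv.swap_apply_def, Prod.mk.injEq] at *
  grind

lemma card_repC3 : Fintype.card {p // RepC3 p} = 3970 := by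
  rw [Fintype.card_subtype]
  decide +kernel

lemma comm_collC3_iff (O : Matrix (Fin 64) (Fin 64) ℂ) :
    collC3 * O = O * collC3 ↔
      ∀ i j, O (Equiv.swap 21 42 i) (Equiv.swap 21 42 j) = O i j := by
  have h1 : ∀ i j, (collC3 * O) i j = O (Equiv.swap 21 42 i) j := by
    intro i j
    rw [Matrix.mul_apply, Finset.sum_eq_single (Equiv.swap 21 42 i)]
    · simp [collC3]
    · intro b _ hb
      have : i ≠ Equiv.swap 21 42 b := by
        rintro rfl
        simp at hb
      simp [collC3, this]
    · simp
  have h2 : ∀ i j, (O * collC3) i j = O i (Equiv.swap 21 42 j) := by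
    intro i j
    rw [Matrix.mul_apply, Finset.sum_eq_single (Equiv.swap 21 42 j)]
    · simp [collC3]
    · intro b _ hb
      simp [collC3, hb]
    · simp
  constructor
  · intro h i j
    have := congrFun (congrFun h i) (Equiv.swap 21 42 j)
    rw [h1, h2] at this
    simpa using this
  · intro h
    ext i j
    rw [h1, h2, ← h i (Equiv.swap 21 42 j), Equiv.swap_apply_self]

/-- Real coordinates of a quantum invariant: `Re + Im` of each representative entry. -/
noncomputable def coordC3 : quantumInvariants collC3 →ₗ[ℝ] ({p // RepC3 p} → ℝ) where
  toFun O := fun p => ((O : Matrix (Fin 64) (Fin 64) ℂ) p.1.1 p.1.2).re +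
    ((O : Matrix (Fin 64) (Fin 64) ℂ) p.1.1 p.1.2).im
  map_add' A B := by
    ext p
    simp
    ring
  map_smul' r A := by
    ext p
    simp
    ring

lemma coordC3_injective : Function.Injective coordC3 := by
  rw [injective_iff_map_eq_zero]
  rintro ⟨O, hH, hC⟩ h
  rw [comm_collC3_iff] at hC
  have key : ∀ p : Fin 64 × Fin 64, (O p.1 p.2).re + (O p.1 p.2).im = 0 := by
    intro p
    by_cases hp : RepC3 p
    · exact congrFun h ⟨p, hp⟩
    · have := congrFun h ⟨tauC3 p, repC3_tau p hp⟩
      simpa [coordC3, tauC3, hC] using this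
  apply Subtype.ext
  ext i j
  have a := key (i, j)
  have b := key (j, i)
  have c := hH.apply i j
  have cr := congrArg Complex.re c
  have ci := congrArg Complex.im c
  simp at a b cr ci
  apply Complex.ext <;> simp <;> linarith

lemma coordC3_surjective : Function.Surjective coordC3 := by
  intro g
  let R : Fin 64 × Fin 64 → ℝ := fun p =>
    if hp : RepC3 p then g ⟨p, hp⟩ else g ⟨tauC3 p, repC3_tau p hp⟩
  have hR : ∀ p, R (tauC3 p) = R p := by
    intro p
    by_cases hp : RepC3 p <;> by_cases hq : RepC3 (tauC3 p)
    · rw [repC3_both p hp hq]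
    · simp only [R, hp, hq, dif_pos, dif_neg, not_false_eq_true, tauC3_tauC3]
    · simp only [R, hp, hq, dif_pos, dif_neg, not_false_eq_true]
    · exact absurd (repC3_tau p hp) hq
  let O : Matrix (Fin 64) (Fin 64) ℂ := fun i j =>
    ⟨(R (i, j) + R (j, i)) / 2, (R (i, j) - R (j, i)) / 2⟩
  refine ⟨⟨O, ?_, ?_⟩, ?_⟩
  · apply Matrix.IsHermitian.ext
    intro i j
    apply Complex.ext <;> simp [O] <;> ring
  · rw [comm_collC3_iff]
    intro i j
    have a := hR (i, j)
    have b := hR (j, i)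
    simp only [tauC3] at a b
    simp only [O, a, b]
  · ext ⟨p, hp⟩
    have : R p = g ⟨p, hp⟩ := by simp only [R, hp, dif_pos]
    rw [← this]
    simp only [coordC3, LinearMap.coe_mk, AddHom.coe_mk, O]
    ring

/-- **Counting quantum invariants of FHP with only the 3-body collision:** the real
vector space of Hermitian `64 × 64` matrices `O` with `C₃·O = O·C₃` has real dimension
exactly `3970 = 4⁶ − 126`. -/
theorem fhp_B3_quantum_invariants_dim :
    Module.finrank ℝ (quantumInvariants collC3) = 3970 ∧ 3970 = 4 ^ 6 - 126 := by
  refine ⟨?_, by norm_num⟩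
  rw [(LinearEquiv.ofBijective coordC3 ⟨coordC3_injective, coordC3_surjective⟩).finrank_eq,
    Module.finrank_fintype_fun_eq_card, card_repC3]
end
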